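/- arXiv:2510.25482 — 2 statements merged into one kernel-verified Lean document; each statement's English description precedes it below -/
import Mathlib

section
/- For all integers j, k ≥ 0 and every μ ∈ ℂ, the congruence orbit of the skew-symmetric pencil M_j ⊕ H_{k+1}(μ) is contained in the closure of the congruence orbit of the skew-symmetric pencil M_{j+1} ⊕ H_k(μ) (both pencils have size (2j+2k+3) × (2j+2k+3)). -/
/-!
Basic framework: a complex `m × n` matrix pencil `A - λ B` is formalized as the
pair `(A, B)` of matrices.  We define strict equivalence, congruence,
skew-symmetry, orbits, direct sums, and the cover relations for the orbit
closure hierarchies (in the Euclidean topology).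
-/

open Matrix

noncomputable section

/-- An `m × n` complex matrix pencil `A - λ B`, formalized as the pair `(A, B)`. -/
abbrev Pencil (m n : ℕ) : Type :=
  Matrix (Fin m) (Fin n) ℂ × Matrix (Fin m) (Fin n) ℂ

namespace Pencil

/-- Strict equivalence of matrix pencils: `Q⁻¹ * A * R = C` and `Q⁻¹ * B * R = D`
for some invertible `Q`, `R`. -/
def StrictEquiv {m n : ℕ} (P Q : Pencil m n) : Prop :=
  ∃ (S : Matrix (Fin m) (Fin m) ℂ) (R : Matrix (Fin n) (Fin n) ℂ),
    IsUnit S ∧ IsUnit R ∧ S⁻¹ * P.1 * R = Q.1 ∧ S⁻¹ * P.2 * R = Q.2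

/-- The strict-equivalence orbit of a pencil. -/
def orbE {m n : ℕ} (P : Pencil m n) : Set (Pencil m n) :=
  {Q | StrictEquiv P Q}

/-- A pencil `A - λ B` is skew-symmetric if `Aᵀ = -A` and `Bᵀ = -B`. -/
def IsSkew {n : ℕ} (P : Pencil n n) : Prop :=
  P.1ᵀ = -P.1 ∧ P.2ᵀ = -P.2

/-- Congruence of (square) matrix pencils: `Sᵀ * A * S = C` and `Sᵀ * B * S = D`
for some invertible `S`. -/
def Congruent {n : ℕ} (P Q : Pencil n n) : Prop :=
  ∃ S : Matrix (Fin n) (Fin n) ℂ,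
    IsUnit S ∧ Sᵀ * P.1 * S = Q.1 ∧ Sᵀ * P.2 * S = Q.2

/-- The congruence orbit of a pencil. -/
def orbC {n : ℕ} (P : Pencil n n) : Set (Pencil n n) :=
  {Q | Congruent P Q}

/-- Direct (block-diagonal) sum of two pencils. -/
def dsum {m n p q : ℕ} (P : Pencil m n) (Q : Pencil p q) : Pencil (m + p) (n + q) :=
  ((fromBlocks P.1 0 0 Q.1).submatrix finSumFinEquiv.symm finSumFinEquiv.symm,
   (fromBlocks P.2 0 0 Q.2).submatrix finSumFinEquiv.symm finSumFinEquiv.symm)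

/-- Transport a pencil along equalities of its dimensions. -/
def cast {m n m' n' : ℕ} (hm : m = m') (hn : n = n') (P : Pencil m n) : Pencil m' n' :=
  (P.1.submatrix (finCongr hm.symm) (finCongr hn.symm),
   P.2.submatrix (finCongr hm.symm) (finCongr hn.symm))

/-- `orbE P1` covers `orbE P2` in the closure hierarchy of strict-equivalence
orbits: `P1` is not strictly equivalent to `P2`, `orbE P2 ⊆ closure (orbE P1)`,
and there is no intermediate orbit strictly between them. -/
def CoversE {m n : ℕ} (P1 P2 : Pencil m n) : Prop :=
  ¬ StrictEquiv P1 P2 ∧ orbE P2 ⊆ closure (orbE P1) ∧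
    ¬ ∃ P : Pencil m n, ¬ StrictEquiv P P1 ∧ ¬ StrictEquiv P P2 ∧
        orbE P ⊆ closure (orbE P1) ∧ orbE P2 ⊆ closure (orbE P)

/-- `orbC P1` covers `orbC P2` in the closure hierarchy of congruence orbits of
skew-symmetric pencils: `P1` is not congruent to `P2`,
`orbC P2 ⊆ closure (orbC P1)`, and there is no congruence orbit of a
skew-symmetric pencil strictly between them. -/
def CoversC {n : ℕ} (P1 P2 : Pencil n n) : Prop :=
  ¬ Congruent P1 P2 ∧ orbC P2 ⊆ closure (orbC P1) ∧
    ¬ ∃ P : Pencil n n, IsSkew P ∧ ¬ Congruent P P1 ∧ ¬ Congruent P P2 ∧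
        orbC P ⊆ closure (orbC P1) ∧ orbC P2 ⊆ closure (orbC P)

end Pencil

/-! Canonical building blocks. -/

/-- The `k × k` Jordan block `J_k(μ)`. -/
def Jmat (k : ℕ) (μ : ℂ) : Matrix (Fin k) (Fin k) ℂ :=
  Matrix.of fun i j => if (j : ℕ) = (i : ℕ) then μ else if (j : ℕ) = (i : ℕ) + 1 then 1 else 0

/-- The `k × (k+1)` matrix `F_k` with ones on the superdiagonal. -/
def Fmat (k : ℕ) : Matrix (Fin k) (Fin (k + 1)) ℂ :=
  Matrix.of fun i j => if (j : ℕ) = (i : ℕ) + 1 then 1 else 0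

/-- The `k × (k+1)` matrix `G_k` with ones on the diagonal. -/
def Gmat (k : ℕ) : Matrix (Fin k) (Fin (k + 1)) ℂ :=
  Matrix.of fun i j => if (j : ℕ) = (i : ℕ) then 1 else 0

/-- The Kronecker block `E_k(μ) = J_k(μ) - λ I_k`. -/
def Eblk (k : ℕ) (μ : ℂ) : Pencil k k := (Jmat k μ, 1)

/-- The Kronecker block `E_k(∞) = I_k - λ J_k(0)`. -/
def EInfblk (k : ℕ) : Pencil k k := (1, Jmat k 0)

/-- The Kronecker block `L_k = F_k - λ G_k`. -/
def Lblk (k : ℕ) : Pencil k (k + 1) := (Fmat k, Gmat k)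

/-- The Kronecker block `L_kᵀ = F_kᵀ - λ G_kᵀ`. -/
def LTblk (k : ℕ) : Pencil (k + 1) k := ((Fmat k)ᵀ, (Gmat k)ᵀ)

/-- The skew-symmetric matrix `[[0, X], [-Xᵀ, 0]]`. -/
def skewPair {p q : ℕ} (X : Matrix (Fin p) (Fin q) ℂ) :
    Matrix (Fin (p + q)) (Fin (p + q)) ℂ :=
  (fromBlocks 0 X (-Xᵀ) 0).submatrix finSumFinEquiv.symm finSumFinEquiv.symm

/-- The skew-symmetric canonical block `H_h(μ)` (size `2h × 2h`). -/
def Hblk (h : ℕ) (μ : ℂ) : Pencil (h + h) (h + h) :=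
  (skewPair (Jmat h μ), skewPair (1 : Matrix (Fin h) (Fin h) ℂ))

/-- The skew-symmetric canonical block `K_k = H_k(∞)` (size `2k × 2k`). -/
def Kblk (k : ℕ) : Pencil (k + k) (k + k) :=
  (skewPair (1 : Matrix (Fin k) (Fin k) ℂ), skewPair (Jmat k 0))

/-- The skew-symmetric canonical block `M_m` (size `(2m+1) × (2m+1)`). -/
def Mblk (m : ℕ) : Pencil (m + (m + 1)) (m + (m + 1)) :=
  (skewPair (Fmat m), skewPair (Gmat m))

/-!
The blocks `M_m` and `H_h(μ)` are the images of the Kronecker blocks `L_m` and `E_h(μ)` under the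
continuous map `A ↦ [[0, A], [-Aᵀ, 0]]`, which turns strict equivalence into congruence. So it is
enough to degenerate `L_{j+1} ⊕ E_k(μ)` to `L_j ⊕ E_{k+1}(μ)` under strict equivalence.

Put `ε` in the entry of `F_j ⊕ J_{k+1}(μ)` that lies in the first row of `J_{k+1}(μ)` and the first
column of `F_j`; as `ε → 0` this tends to `L_j ⊕ E_{k+1}(μ)`. By rescaling, all `ε ≠ 0` give
strictly equivalent pencils, so take `ε = 1`. Moving the first row and column of the Jordan block
over to the left block then turns the pencil into
`[[F_{j+1} + μ e₀₀, e₀₀], [0, J_k(μ)]] - λ (G_{j+1} ⊕ I_k)`. The term `μ e₀₀` is removed by the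
transvection `1 - μ Nᵀ` with `N` the nilpotent Jordan block, and the coupling `e₀₀` by solving a
Sylvester equation, whose solution is found row by row.
-/

open Filter Topology

namespace Pencil

section StrictEquivalence

variable {M N : ℕ}

theorem StrictEquiv.symm {P Q : Pencil M N} : StrictEquiv P Q → StrictEquiv Q P := by
  rintro ⟨S, R, hS, hR, h₁, h₂⟩
  have cancel {A C : Matrix (Fin M) (Fin N) ℂ} (h : S⁻¹ * A * R = C) : S⁻¹⁻¹ * C * R⁻¹ = A := by
    rw [isUnit_iff_isUnit_det] at hS hR
    rw [nonsing_inv_nonsing_inv S hS, ← h, Matrix.mul_assoc S⁻¹, mul_nonsing_inv_cancel_left S _ hS,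
      mul_nonsing_inv_cancel_right R _ hR]
  exact ⟨S⁻¹, R⁻¹, isUnit_nonsing_inv_iff.2 hS, isUnit_nonsing_inv_iff.2 hR, cancel h₁, cancel h₂⟩

theorem StrictEquiv.trans {P Q T : Pencil M N} :
    StrictEquiv P Q → StrictEquiv Q T → StrictEquiv P T := by
  rintro ⟨S, R, hS, hR, h₁, h₂⟩ ⟨S', R', hS', hR', h₁', h₂'⟩
  have comp {A C E : Matrix (Fin M) (Fin N) ℂ} (h : S⁻¹ * A * R = C) (h' : S'⁻¹ * C * R' = E) :
      (S * S')⁻¹ * A * (R * R') = E := by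
    rw [← h', ← h, Matrix.mul_inv_rev]
    simp only [Matrix.mul_assoc]
  exact ⟨S * S', R * R', hS.mul hS', hR.mul hR', comp h₁ h₁', comp h₂ h₂'⟩

theorem StrictEquiv.orbE_subset {P Q : Pencil M N} (h : StrictEquiv P Q) : orbE Q ⊆ orbE P :=
  fun _ => h.trans

theorem strictEquiv_submatrix {ι κ : Type*} [Fintype ι] [Fintype κ] [DecidableEq ι]
    [DecidableEq κ] (f f' : Fin M ≃ ι) (g g' : Fin N ≃ κ)
    {A B A' B' : Matrix ι κ ℂ} {S : Matrix ι ι ℂ} {R : Matrix κ κ ℂ} (hS : IsUnit S)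
    (hR : IsUnit R) (hA : A * R = S * A') (hB : B * R = S * B') :
    StrictEquiv (A.submatrix f g, B.submatrix f g) (A'.submatrix f' g', B'.submatrix f' g') := by
  have transport {X X' : Matrix ι κ ℂ} (h : X * R = S * X') :
      (S.submatrix f f')⁻¹ * X.submatrix f g * R.submatrix g g' = X'.submatrix f' g' := by
    rw [Matrix.mul_assoc, submatrix_mul_equiv, h, inv_submatrix_equiv, submatrix_mul_equiv,
      nonsing_inv_mul_cancel_left S _ ((isUnit_iff_isUnit_det S).1 hS)]
  exact ⟨S.submatrix f f', R.submatrix g g', (isUnit_submatrix_equiv f f').2 hS,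
    (isUnit_submatrix_equiv g g').2 hR, transport hA, transport hB⟩

variable {m n p q : ℕ}

theorem strictEquiv_fromBlocks_of_sylvester (f f' : Fin M ≃ Fin m ⊕ Fin p)
    (g g' : Fin N ≃ Fin n ⊕ Fin q) {A B A' B' : Matrix (Fin m) (Fin n) ℂ}
    {C C' : Matrix (Fin m) (Fin q) ℂ} {D E : Matrix (Fin p) (Fin q) ℂ}
    {S : Matrix (Fin m) (Fin m) ℂ} {R : Matrix (Fin n) (Fin n) ℂ}
    {K : Matrix (Fin m) (Fin p) ℂ} {K' : Matrix (Fin n) (Fin q) ℂ}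
    (hS : IsUnit S) (hR : IsUnit R) (hA : A * R = S * A') (hB : B * R = S * B')
    (hC : A * K' + C = K * D) (hC' : B * K' + C' = K * E) :
    StrictEquiv
      ((fromBlocks A C 0 D).submatrix f g, (fromBlocks B C' 0 E).submatrix f g)
      ((fromBlocks A' 0 0 D).submatrix f' g', (fromBlocks B' 0 0 E).submatrix f' g') := by
  refine strictEquiv_submatrix f f' g g' (S := fromBlocks S K 0 1) (R := fromBlocks R K' 0 1)
    (isUnit_fromBlocks_zero₂₁.2 ⟨hS, isUnit_one⟩) (isUnit_fromBlocks_zero₂₁.2 ⟨hR, isUnit_one⟩)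
    ?_ ?_
  · simp [fromBlocks_multiply, hA, hC]
  · simp [fromBlocks_multiply, hB, hC']

theorem fromBlocks_zero_mem_closure_orbE (f : Fin M ≃ Fin m ⊕ Fin p) (g : Fin N ≃ Fin n ⊕ Fin q)
    (A B : Matrix (Fin m) (Fin n) ℂ) (C C' : Matrix (Fin p) (Fin n) ℂ)
    (D E : Matrix (Fin p) (Fin q) ℂ) :
    ((fromBlocks A 0 0 D).submatrix f g, (fromBlocks B 0 0 E).submatrix f g) ∈
      closure (orbE
        ((fromBlocks A 0 C D).submatrix f g, (fromBlocks B 0 C' E).submatrix f g)) := by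
  let scaled (ε : ℂ) : Pencil M N :=
    ((fromBlocks A 0 (ε • C) D).submatrix f g, (fromBlocks B 0 (ε • C') E).submatrix f g)
  have continuous_scaled : Continuous scaled := by fun_prop
  have tendsto_scaled : Tendsto scaled (𝓝[≠] 0) (𝓝 (scaled 0)) :=
    continuous_scaled.continuousAt.tendsto.mono_left nhdsWithin_le_nhds
  have scaled_mem (ε : ℂ) (hε : ε ≠ 0) : scaled ε ∈ orbE
      ((fromBlocks A 0 C D).submatrix f g, (fromBlocks B 0 C' E).submatrix f g) := by
    have isUnit_smul_one (l : ℕ) : IsUnit (ε • (1 : Matrix (Fin l) (Fin l) ℂ)) :=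
      isUnit_one.smul (Units.mk0 ε hε)
    refine strictEquiv_submatrix f f g g
      (S := fromBlocks (ε • 1) 0 0 1) (R := fromBlocks (ε • 1) 0 0 1) ?_ ?_ ?_ ?_
    all_goals simp [fromBlocks_multiply, isUnit_fromBlocks_zero₂₁, isUnit_smul_one]
  have zero_scaled : scaled 0 =
      ((fromBlocks A 0 0 D).submatrix f g, (fromBlocks B 0 0 E).submatrix f g) := by
    simp [scaled]
  exact zero_scaled ▸ mem_closure_of_tendsto tendsto_scaled
    (eventually_mem_nhdsWithin.mono scaled_mem)

end StrictEquivalence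

section Congruence

variable {n : ℕ}

theorem Congruent.symm {P Q : Pencil n n} : Congruent P Q → Congruent Q P := by
  rintro ⟨S, hS, h₁, h₂⟩
  have cancel {A C : Matrix (Fin n) (Fin n) ℂ} (h : Sᵀ * A * S = C) : S⁻¹ᵀ * C * S⁻¹ = A := by
    have hS := (isUnit_iff_isUnit_det S).1 hS
    rw [← h, transpose_nonsing_inv, Matrix.mul_assoc Sᵀ,
      nonsing_inv_mul_cancel_left Sᵀ _ (isUnit_det_transpose S hS),
      mul_nonsing_inv_cancel_right S _ hS]
  exact ⟨S⁻¹, isUnit_nonsing_inv_iff.2 hS, cancel h₁, cancel h₂⟩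

theorem Congruent.trans {P Q T : Pencil n n} :
    Congruent P Q → Congruent Q T → Congruent P T := by
  rintro ⟨S, hS, h₁, h₂⟩ ⟨S', hS', h₁', h₂'⟩
  have comp {A C E : Matrix (Fin n) (Fin n) ℂ} (h : Sᵀ * A * S = C) (h' : S'ᵀ * C * S' = E) :
      (S * S')ᵀ * A * (S * S') = E := by
    rw [← h', ← h, transpose_mul]
    simp only [Matrix.mul_assoc]
  exact ⟨S * S', hS.mul hS', comp h₁ h₁', comp h₂ h₂'⟩

theorem Congruent.orbC_eq {P Q : Pencil n n} (h : Congruent P Q) : orbC P = orbC Q :=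
  Set.ext fun _ => ⟨h.symm.trans, h.trans⟩

theorem orbC_subset_closure_orbC {P Q : Pencil n n} (h : Q ∈ closure (orbC P)) :
    orbC Q ⊆ closure (orbC P) := by
  rintro T ⟨S, hS, h₁, h₂⟩
  let congr (U : Pencil n n) : Pencil n n := (Sᵀ * U.1 * S, Sᵀ * U.2 * S)
  have continuous_congr : Continuous congr := by fun_prop
  have congr_Q : congr Q = T := Prod.ext h₁ h₂
  exact congr_Q ▸ map_mem_closure continuous_congr h fun U hU =>
    Congruent.trans hU ⟨S, hS, rfl, rfl⟩

theorem congruent_submatrix {ι : Type*} (f f' : Fin n ≃ ι) (A B : Matrix ι ι ℂ) :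
    Congruent (A.submatrix f f, B.submatrix f f) (A.submatrix f' f', B.submatrix f' f') := by
  classical
  have := Fintype.ofEquiv (Fin n) f
  exact ⟨(1 : Matrix ι ι ℂ).submatrix f f', (isUnit_submatrix_equiv f f').2 isUnit_one,
    by simp [submatrix_mul_equiv], by simp [submatrix_mul_equiv]⟩

end Congruence

section DirectSum

/-- The splitting of the indices of a direct sum `Pencil.dsum` whose size has been renamed by
`Pencil.cast`. -/
def finSplit {m p M : ℕ} (h : m + p = M) : Fin M ≃ Fin m ⊕ Fin p :=
  (finCongr h.symm).trans finSumFinEquiv.symm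

theorem cast_dsum {m n p q M N : ℕ} (hM : m + p = M) (hN : n + q = N) (P : Pencil m n)
    (Q : Pencil p q) :
    cast hM hN (dsum P Q) =
      ((fromBlocks P.1 0 0 Q.1).submatrix (finSplit hM) (finSplit hN),
        (fromBlocks P.2 0 0 Q.2).submatrix (finSplit hM) (finSplit hN)) :=
  rfl

theorem fromBlocks_diagonal_submatrix {α ι κ ι' κ' r s r' s' : Type*} [Zero α]
    (X : Matrix ι κ α) (Y : Matrix ι' κ' α) (f : r → ι) (g : s → κ) (f' : r' → ι') (g' : s' → κ') :
    fromBlocks (X.submatrix f g) 0 0 (Y.submatrix f' g') =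
      (fromBlocks X 0 0 Y).submatrix (Sum.map f f') (Sum.map g g') := by
  ext (_ | _) (_ | _) <;> rfl

end DirectSum

section Skew

/-- The matrix `[[0, X], [-Xᵀ, 0]]` of `skewPair`, over arbitrary index types so that direct sums
can be rearranged without arithmetic on `Fin`. -/
def skewBlock {α ι κ : Type*} [Zero α] [Neg α] (X : Matrix ι κ α) : Matrix (ι ⊕ κ) (ι ⊕ κ) α :=
  fromBlocks 0 X (-Xᵀ) 0

/-- The skew-symmetric pencil `[[0, A], [-Aᵀ, 0]] - λ [[0, B], [-Bᵀ, 0]]` built from `A - λ B`.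
It sends `L_m` to `M_m` and `E_h(μ)` to `H_h(μ)`. -/
def skew {m n : ℕ} (P : Pencil m n) : Pencil (m + n) (m + n) :=
  (skewPair P.1, skewPair P.2)

variable {m n p q : ℕ}

theorem continuous_skew : Continuous (skew : Pencil m n → Pencil (m + n) (m + n)) := by
  unfold skew skewPair
  fun_prop

theorem StrictEquiv.congruent_skew {P Q : Pencil m n} :
    StrictEquiv P Q → Congruent (skew P) (skew Q) := by
  rintro ⟨S, R, hS, hR, h₁, h₂⟩
  have congr_skewPair {A C : Matrix (Fin m) (Fin n) ℂ} (h : S⁻¹ * A * R = C) :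
      ((fromBlocks S⁻¹ᵀ 0 0 R).submatrix finSumFinEquiv.symm finSumFinEquiv.symm)ᵀ * skewPair A *
        (fromBlocks S⁻¹ᵀ 0 0 R).submatrix finSumFinEquiv.symm finSumFinEquiv.symm =
        skewPair C := by
    simp only [skewPair, transpose_submatrix, submatrix_mul_equiv, fromBlocks_transpose,
      fromBlocks_multiply]
    simp [← h, Matrix.mul_assoc]
  refine ⟨_, (isUnit_submatrix_equiv _ _).2 (isUnit_fromBlocks_zero₂₁.2 ⟨?_, hR⟩),
    congr_skewPair h₁, congr_skewPair h₂⟩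
  exact (isUnit_transpose _).2 (isUnit_nonsing_inv_iff.2 hS)

theorem skew_Lblk (m : ℕ) : skew (Lblk m) = Mblk m :=
  rfl

theorem skew_Eblk (h : ℕ) (μ : ℂ) : skew (Eblk h μ) = Hblk h μ :=
  rfl

theorem skew_mem_closure_orbC {P Q : Pencil m n} (h : P ∈ closure (orbE Q)) :
    skew P ∈ closure (orbC (skew Q)) :=
  map_mem_closure continuous_skew h fun _ => StrictEquiv.congruent_skew

theorem skewBlock_submatrix {α ι κ ι' κ' : Type*} [Zero α] [Neg α] (X : Matrix ι κ α)
    (f : ι' → ι) (g : κ' → κ) :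
    skewBlock (X.submatrix f g) = (skewBlock X).submatrix (Sum.map f g) (Sum.map f g) := by
  ext (_ | _) (_ | _) <;> rfl

theorem fromBlocks_skewBlock {α ι κ ι' κ' : Type*} [NegZeroClass α] (X : Matrix ι κ α)
    (Y : Matrix ι' κ' α) :
    fromBlocks (skewBlock X) 0 0 (skewBlock Y) =
      (skewBlock (fromBlocks X 0 0 Y)).submatrix (Equiv.sumSumSumComm ι κ ι' κ')
        (Equiv.sumSumSumComm ι κ ι' κ') := by
  ext ((_ | _) | (_ | _)) ((_ | _) | (_ | _)) <;> simp [skewBlock]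

theorem congruent_skew_cast_dsum {M N : ℕ} (hM : m + p = M) (hN : n + q = N)
    (h : m + n + (p + q) = M + N) (P : Pencil m n) (Q : Pencil p q) :
    Congruent (skew (cast hM hN (dsum P Q))) (cast h h (dsum (skew P) (skew Q))) := by
  let split : Fin (M + N) ≃ (Fin m ⊕ Fin p) ⊕ (Fin n ⊕ Fin q) :=
    finSumFinEquiv.symm.trans ((finSplit hM).sumCongr (finSplit hN))
  let splitSkew : Fin (M + N) ≃ (Fin m ⊕ Fin p) ⊕ (Fin n ⊕ Fin q) :=
    ((finSplit h).trans (finSumFinEquiv.symm.sumCongr finSumFinEquiv.symm)).trans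
      (Equiv.sumSumSumComm _ _ _ _)
  have skewPair_eq (X : Matrix (Fin m) (Fin n) ℂ) (Y : Matrix (Fin p) (Fin q) ℂ) :
      skewPair ((fromBlocks X 0 0 Y).submatrix (finSplit hM) (finSplit hN)) =
        (skewBlock (fromBlocks X 0 0 Y)).submatrix split split :=
    congrArg (fun Z => submatrix Z finSumFinEquiv.symm finSumFinEquiv.symm)
      (skewBlock_submatrix _ _ _)
  have fromBlocks_skewPair_eq (X : Matrix (Fin m) (Fin n) ℂ) (Y : Matrix (Fin p) (Fin q) ℂ) :
      (fromBlocks (skewPair X) 0 0 (skewPair Y)).submatrix (finSplit h) (finSplit h) =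
        (skewBlock (fromBlocks X 0 0 Y)).submatrix splitSkew splitSkew := by
    change (fromBlocks ((skewBlock X).submatrix _ _) 0 0 ((skewBlock Y).submatrix _ _)).submatrix
      _ _ = _
    rw [fromBlocks_diagonal_submatrix, fromBlocks_skewBlock]
    rfl
  rw [cast_dsum, cast_dsum]
  simp only [skew, skewPair_eq, fromBlocks_skewPair_eq]
  exact congruent_submatrix split splitSkew _ _

theorem orbC_dsum_skew_subset_closure {m' n' p' q' M N L : ℕ} (hM : m + p = M) (hN : n + q = N)
    (hM' : m' + p' = M) (hN' : n' + q' = N) (hL : m + n + (p + q) = L)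
    {P : Pencil m n} {Q : Pencil p q} {P' : Pencil m' n'} {Q' : Pencil p' q'}
    (h : cast hM hN (dsum P Q) ∈ closure (orbE (cast hM' hN' (dsum P' Q')))) :
    orbC (cast hL hL (dsum (skew P) (skew Q))) ⊆
      closure (orbC (cast (by omega) (by omega) (dsum (skew P') (skew Q')) : Pencil L L)) := by
  obtain rfl : L = M + N := by omega
  rw [← (congruent_skew_cast_dsum hM hN hL P Q).orbC_eq,
    ← (congruent_skew_cast_dsum hM' hN' (by omega) P' Q').orbC_eq]
  exact orbC_subset_closure_orbC (skew_mem_closure_orbC h)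

end Skew

section KroneckerBlocks

/-- The matrix unit `e₀₀`, the zero matrix if there are no rows or no columns. -/
def corner (m n : ℕ) : Matrix (Fin m) (Fin n) ℂ :=
  of fun i j => if (i : ℕ) = 0 ∧ (j : ℕ) = 0 then 1 else 0

variable {c : Type*} {m n k : ℕ}

theorem Fmat_mul (X : Matrix (Fin (m + 1)) c ℂ) : Fmat m * X = X.submatrix Fin.succ id := by
  ext i b
  rw [mul_apply, Finset.sum_eq_single i.succ] <;> simp +contextual [Fmat, Fin.ext_iff]

theorem Gmat_mul (X : Matrix (Fin (m + 1)) c ℂ) : Gmat m * X = X.submatrix Fin.castSucc id := by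
  ext i b
  rw [mul_apply, Finset.sum_eq_single i.castSucc] <;> simp +contextual [Gmat, Fin.ext_iff]

theorem corner_mul_eq_zero {X : Matrix (Fin (n + 1)) c ℂ} (hX : X 0 = 0) :
    corner m (n + 1) * X = 0 := by
  ext i b
  rw [mul_apply]
  refine Finset.sum_eq_zero fun j _ => ?_
  cases j using Fin.cases <;> simp [corner, hX]

theorem Jmat_zero_apply (i j : Fin m) : Jmat m 0 i j = if (j : ℕ) = i + 1 then 1 else 0 := by
  simp only [Jmat, of_apply]
  split_ifs <;> first | rfl | omega

theorem transpose_Jmat_zero_mul_zero (X : Matrix (Fin (m + 1)) c ℂ) :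
    ((Jmat (m + 1) 0)ᵀ * X) 0 = 0 := by
  ext b
  simp [mul_apply, Jmat_zero_apply]

theorem transpose_Jmat_zero_mul_succ (X : Matrix (Fin (m + 1)) c ℂ) (i : Fin m) :
    ((Jmat (m + 1) 0)ᵀ * X) i.succ = X i.castSucc := by
  ext b
  rw [mul_apply, Finset.sum_eq_single i.castSucc] <;>
    simp +contextual [Jmat_zero_apply, Fin.ext_iff, eq_comm]

theorem Fmat_mul_transpose_Jmat_zero (m : ℕ) : Fmat m * (Jmat (m + 1) 0)ᵀ = Gmat m := by
  ext i j
  simp [Fmat_mul, Jmat_zero_apply, Gmat, eq_comm]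

theorem Gmat_mul_transpose_Jmat_zero (m : ℕ) :
    Gmat (m + 1) * (Jmat (m + 2) 0)ᵀ = (Jmat (m + 1) 0)ᵀ * Gmat (m + 1) := by
  rw [Gmat_mul]
  ext i j
  cases i using Fin.cases
  · rw [transpose_Jmat_zero_mul_zero]
    simp [Jmat_zero_apply]
  · rw [transpose_Jmat_zero_mul_succ]
    simp [Jmat_zero_apply, Gmat, eq_comm]

theorem transpose_Jmat_zero_mul_Fmat_add_corner (m : ℕ) :
    (Jmat (m + 1) 0)ᵀ * Fmat (m + 1) + corner (m + 1) (m + 2) = Gmat (m + 1) := by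
  ext i j
  cases i using Fin.cases
  · simp [transpose_Jmat_zero_mul_zero, corner, Gmat]
  · simp [transpose_Jmat_zero_mul_succ, corner, Fmat, Gmat]

theorem isUnit_one_sub_smul_transpose_Jmat_zero (m : ℕ) (μ : ℂ) :
    IsUnit (1 - μ • (Jmat m 0)ᵀ) := by
  have isLowerTriangular : (1 - μ • (Jmat m 0)ᵀ).IsLowerTriangular := by
    intro i j hij
    have hij : (i : ℕ) < j := hij
    simp [Jmat_zero_apply, one_apply, Fin.ext_iff, hij.ne, show (i : ℕ) ≠ j + 1 by omega]
  rw [isUnit_iff_isUnit_det, det_of_isLowerTriangular _ isLowerTriangular]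
  simp [Jmat_zero_apply]

theorem Fmat_add_corner_mul (m : ℕ) (μ : ℂ) :
    (Fmat (m + 1) + μ • corner (m + 1) (m + 2)) * (1 - μ • (Jmat (m + 2) 0)ᵀ) =
      (1 - μ • (Jmat (m + 1) 0)ᵀ) * Fmat (m + 1) := by
  have corner_mul : corner (m + 1) (m + 2) * (Jmat (m + 2) 0)ᵀ = 0 :=
    corner_mul_eq_zero (by ext j; simp [Jmat_zero_apply])
  calc
    _ = Fmat (m + 1) - μ • (Gmat (m + 1) - corner (m + 1) (m + 2)) := by
      simp only [Matrix.add_mul, Matrix.mul_sub, Matrix.mul_one, Matrix.mul_smul, Matrix.smul_mul,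
        Fmat_mul_transpose_Jmat_zero, corner_mul]
      module
    _ = Fmat (m + 1) - μ • ((Jmat (m + 1) 0)ᵀ * Fmat (m + 1)) := by
      rw [← transpose_Jmat_zero_mul_Fmat_add_corner, add_sub_cancel_right]
    _ = _ := by rw [Matrix.sub_mul, Matrix.one_mul, Matrix.smul_mul]

theorem Gmat_mul_one_sub (m : ℕ) (μ : ℂ) :
    Gmat (m + 1) * (1 - μ • (Jmat (m + 2) 0)ᵀ) =
      (1 - μ • (Jmat (m + 1) 0)ᵀ) * Gmat (m + 1) := by
  rw [Matrix.mul_sub, Matrix.mul_one, Matrix.mul_smul, Gmat_mul_transpose_Jmat_zero,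
    Matrix.sub_mul, Matrix.one_mul, Matrix.smul_mul]

theorem exists_Fmat_mul_add_eq [Fintype c] (r : c → ℂ) (C : Matrix (Fin m) c ℂ)
    (D : Matrix c c ℂ) :
    ∃ K : Matrix (Fin (m + 1)) c ℂ, K 0 = r ∧ Fmat m * K + C = Gmat m * K * D := by
  let K : Matrix (Fin (m + 1)) c ℂ := Fin.induction r fun i row => row ᵥ* D - C i
  have K_succ (i : Fin m) : K i.succ = K i.castSucc ᵥ* D - C i := Fin.induction_succ ..
  refine ⟨K, rfl, ?_⟩
  rw [Fmat_mul, Gmat_mul]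
  ext i b
  change K i.succ b + C i b = (K i.castSucc ᵥ* D) b
  rw [K_succ, Pi.sub_apply, sub_add_cancel]

/-- The bijection that moves the first index of the right summand to the front of the left one. -/
def moveHead (j k : ℕ) : Fin j ⊕ Fin (k + 1) ≃ Fin (j + 1) ⊕ Fin k where
  toFun := Sum.elim (fun i => .inl i.succ) (Fin.cases (.inl 0) .inr)
  invFun := Sum.elim (Fin.cases (.inr 0) .inl) fun i => .inr i.succ
  left_inv := by
    rintro (i | i)
    · rfl
    · cases i using Fin.cases <;> rfl
  right_inv := by
    rintro (i | i)
    · cases i using Fin.cases <;> rfl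
    · rfl

theorem fromBlocks_Fmat_corner_Jmat (j k : ℕ) (μ : ℂ) :
    fromBlocks (Fmat j) 0 (corner (k + 1) (j + 1)) (Jmat (k + 1) μ) =
      (fromBlocks (Fmat (j + 1) + μ • corner (j + 1) (j + 2)) (corner (j + 1) k) 0
        (Jmat k μ)).submatrix (moveHead j k) (moveHead (j + 1) k) := by
  ext (a | a) (b | b)
  · simp [moveHead, Fmat, corner]
  · cases b using Fin.cases <;> simp [moveHead, Fmat, corner]
  · cases a using Fin.cases <;> simp [moveHead, Fmat, corner]
  · cases a using Fin.cases <;> cases b using Fin.cases <;>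
      simp [moveHead, Fmat, corner, Jmat]

theorem fromBlocks_Gmat_one (j k : ℕ) :
    fromBlocks (Gmat j) 0 0 (1 : Matrix (Fin (k + 1)) (Fin (k + 1)) ℂ) =
      (fromBlocks (Gmat (j + 1)) 0 0 (1 : Matrix (Fin k) (Fin k) ℂ)).submatrix
        (moveHead j k) (moveHead (j + 1) k) := by
  ext (a | a) (b | b)
  · simp [moveHead, Gmat]
  · cases b using Fin.cases <;> simp [moveHead, Gmat]
  · cases a using Fin.cases <;> simp [moveHead, Gmat]
  · cases a using Fin.cases <;> cases b using Fin.cases <;>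
      simp [moveHead, Gmat, one_apply, Fin.ext_iff]

theorem strictEquiv_coupled (j k : ℕ) (μ : ℂ) {M N : ℕ} (f : Fin M ≃ Fin j ⊕ Fin (k + 1))
    (g : Fin N ≃ Fin (j + 1) ⊕ Fin (k + 1)) (f' : Fin M ≃ Fin (j + 1) ⊕ Fin k)
    (g' : Fin N ≃ Fin (j + 2) ⊕ Fin k) :
    StrictEquiv
      ((fromBlocks (Fmat j) 0 (corner (k + 1) (j + 1)) (Jmat (k + 1) μ)).submatrix f g,
        (fromBlocks (Gmat j) 0 0 1).submatrix f g)
      ((fromBlocks (Fmat (j + 1)) 0 0 (Jmat k μ)).submatrix f' g',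
        (fromBlocks (Gmat (j + 1)) 0 0 1).submatrix f' g') := by
  obtain ⟨K, hK, hFK⟩ := exists_Fmat_mul_add_eq 0 (corner (j + 1) k) (Jmat k μ)
  have sylvester_F :
      (Fmat (j + 1) + μ • corner (j + 1) (j + 2)) * K + corner (j + 1) k =
        Gmat (j + 1) * K * Jmat k μ := by
    rw [Matrix.add_mul, Matrix.smul_mul, corner_mul_eq_zero hK, smul_zero, add_zero, hFK]
  have sylvester_G : Gmat (j + 1) * K + 0 = Gmat (j + 1) * K * (1 : Matrix (Fin k) (Fin k) ℂ) := by
    rw [add_zero, Matrix.mul_one]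
  rw [fromBlocks_Fmat_corner_Jmat, fromBlocks_Gmat_one]
  exact strictEquiv_fromBlocks_of_sylvester (f.trans (moveHead j k)) f'
    (g.trans (moveHead (j + 1) k)) g' (isUnit_one_sub_smul_transpose_Jmat_zero _ μ)
    (isUnit_one_sub_smul_transpose_Jmat_zero _ μ) (Fmat_add_corner_mul j μ) (Gmat_mul_one_sub j μ)
    sylvester_F sylvester_G

theorem dsum_Lblk_Eblk_mem_closure_orbE (j k : ℕ) (μ : ℂ) {M N : ℕ} (hM : j + (k + 1) = M)
    (hN : j + 1 + (k + 1) = N) :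
    cast hM hN (dsum (Lblk j) (Eblk (k + 1) μ)) ∈
      closure (orbE (cast (by omega) (by omega) (dsum (Lblk (j + 1)) (Eblk k μ)) :
        Pencil M N)) := by
  rw [cast_dsum, cast_dsum]
  exact closure_mono (strictEquiv_coupled j k μ _ _ _ _).symm.orbE_subset
    (fromBlocks_zero_mem_closure_orbE _ _ _ _ _ _ _ _)

end KroneckerBlocks

end Pencil

/-- **Rule 3 transition as an orbit closure inclusion**: for `j, k ≥ 0` and
`μ ∈ ℂ`, `orbᶜ (M_j ⊕ H_{k+1}(μ)) ⊆ closure (orbᶜ (M_{j+1} ⊕ H_k(μ)))`. -/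
theorem orbC_MH_subset_closure (j k : ℕ) (μ : ℂ) :
    Pencil.orbC (Pencil.cast (by omega) (by omega)
        (Pencil.dsum (Mblk j) (Hblk (k + 1) μ)) :
          Pencil (2 * j + 2 * k + 3) (2 * j + 2 * k + 3)) ⊆
      closure (Pencil.orbC (Pencil.cast (by omega) (by omega)
        (Pencil.dsum (Mblk (j + 1)) (Hblk k μ)) :
          Pencil (2 * j + 2 * k + 3) (2 * j + 2 * k + 3))) := by
  rw [← Pencil.skew_Lblk, ← Pencil.skew_Lblk, ← Pencil.skew_Eblk, ← Pencil.skew_Eblk]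
  exact Pencil.orbC_dsum_skew_subset_closure _ _ _ _ _
    (Pencil.dsum_Lblk_Eblk_mem_closure_orbE j k μ rfl rfl)
end
end

section
/- Let μ_1, …, μ_t ∈ ℂ be pairwise distinct, let k_1, …, k_t be positive integers, and let p, q ≥ 0 be integers with p + q + 1 = k_1 + … + k_t. Then the congruence orbit of the skew-symmetric pencil M_p ⊕ M_q is contained in the closure of the congruence orbit of the skew-symmetric pencil H_{k_1}(μ_1) ⊕ … ⊕ H_{k_t}(μ_t) (both pencils have size 2(k_1+…+k_t) × 2(k_1+…+k_t)). -/
/-!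
Basic framework: a complex `m × n` matrix pencil `A - λ B` is formalized as the
pair `(A, B)` of matrices.  We define strict equivalence, congruence,
skew-symmetry, orbits, direct sums, and the cover relations for the orbit
closure hierarchies (in the Euclidean topology).
-/

open Matrix

noncomputable section

/-- Total size of a direct sum of `H`-blocks given by a list of pairs
`(μᵢ, kᵢ)`. -/
def hSize : List (ℂ × ℕ) → ℕ
  | [] => 0
  | x :: t => (x.2 + x.2) + hSize t

/-- The direct sum `H_{k₁}(μ₁) ⊕ ⋯ ⊕ H_{k_t}(μ_t)`. -/
def hSum : (l : List (ℂ × ℕ)) → Pencil (hSize l) (hSize l)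
  | [] => (0, 0)
  | x :: t => Pencil.dsum (Hblk x.2 x.1) (hSum t)

/-!
Since the `μᵢ` are distinct, `f = J_{k₁}(μ₁) ⊕ ⋯ ⊕ J_{k_t}(μ_t)` has a cyclic vector `v`, and
`H_{k₁}(μ₁) ⊕ ⋯ ⊕ H_{k_t}(μ_t)` is congruent to `[[0, f - λ I], [-(f - λ I)ᵀ, 0]]`. Any choice of
bases for the domain and the codomain of `f - λ I` gives a congruent pencil. Let `n = p + q + 1`,
and let `φ` be the functional with `φ (f^(n-1) v) = 1` and `φ (f^j v) = 0` for `j < n - 1`. Take a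
basis of the domain consisting of vectors dual to `φ ∘ f^i`, `i ≤ p`, together with `-f^j v`,
`j < q`, and a basis of the codomain consisting of vectors dual to `φ ∘ f^i`, `i < p`, together
with `f^j v`, `j ≤ q`. In these bases `f - λ I` is block lower triangular with diagonal blocks
`F_p - λ G_p` and `-(F_q - λ G_q)ᵀ`. Rescaling the two parts of the bases multiplies the
off-diagonal block by an arbitrary `ε ≠ 0`, and `ε → 0` yields `M_p ⊕ M_q`.
-/

open Polynomial Topology
open LinearMap (toMatrix)
open Module (Basis Dual End finrank)

section PairCongruent

variable {ι κ ν ρ R : Type*} [Fintype ι] [Fintype κ] [Fintype ν] [Fintype ρ]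
  [DecidableEq ι] [DecidableEq κ] [DecidableEq ν] [DecidableEq ρ] [CommRing R]

/-- Congruence of pairs of square matrices whose index types may differ; invertibility of the
rectangular change of basis `S` is witnessed by a two-sided inverse `T`. -/
def PairCongruent (P : Matrix ι ι R × Matrix ι ι R) (Q : Matrix κ κ R × Matrix κ κ R) : Prop :=
  ∃ (S : Matrix ι κ R) (T : Matrix κ ι R), S * T = 1 ∧ T * S = 1 ∧
    Sᵀ * P.1 * S = Q.1 ∧ Sᵀ * P.2 * S = Q.2

namespace PairCongruent

variable {P : Matrix ι ι R × Matrix ι ι R} {Q : Matrix κ κ R × Matrix κ κ R}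

theorem of_isEmpty [IsEmpty ι] [IsEmpty κ] : PairCongruent P Q :=
  ⟨0, 0, Subsingleton.elim _ _, Subsingleton.elim _ _, Subsingleton.elim _ _,
    Subsingleton.elim _ _⟩

theorem symm (h : PairCongruent P Q) : PairCongruent Q P := by
  obtain ⟨S, T, hST, hTS, h₁, h₂⟩ := h
  have undo (A : Matrix ι ι R) : Tᵀ * (Sᵀ * A * S) * T = A := by
    calc Tᵀ * (Sᵀ * A * S) * T = (S * T)ᵀ * A * (S * T) := by
          simp only [transpose_mul, Matrix.mul_assoc]
      _ = A := by rw [hST, transpose_one, Matrix.one_mul, Matrix.mul_one]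
  exact ⟨T, S, hTS, hST, h₁ ▸ undo P.1, h₂ ▸ undo P.2⟩

theorem trans {U : Matrix ν ν R × Matrix ν ν R} (h : PairCongruent P Q)
    (h' : PairCongruent Q U) : PairCongruent P U := by
  obtain ⟨S, T, hST, hTS, h₁, h₂⟩ := h
  obtain ⟨S', T', hST', hTS', h₁', h₂'⟩ := h'
  refine ⟨S * S', T' * T, ?_, ?_, ?_, ?_⟩
  · calc S * S' * (T' * T) = S * (S' * T') * T := by simp only [Matrix.mul_assoc]
      _ = 1 := by rw [hST', Matrix.mul_one, hST]
  · calc T' * T * (S * S') = T' * (T * S) * S' := by simp only [Matrix.mul_assoc]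
      _ = 1 := by rw [hTS, Matrix.mul_one, hTS']
  · rw [← h₁', ← h₁]; simp only [transpose_mul, Matrix.mul_assoc]
  · rw [← h₂', ← h₂]; simp only [transpose_mul, Matrix.mul_assoc]

theorem reindex (A B : Matrix ι ι R) (e : ι ≃ κ) :
    PairCongruent (A, B) (reindex e e A, reindex e e B) := by
  refine ⟨(1 : Matrix ι ι R).submatrix id e.symm, (1 : Matrix ι ι R).submatrix e.symm id,
    ?_, ?_, ?_, ?_⟩
  · simp
  all_goals
    ext i j
    simp [mul_apply, one_apply]

theorem fromBlocks {P' : Matrix ν ν R × Matrix ν ν R} {Q' : Matrix ρ ρ R × Matrix ρ ρ R}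
    (h : PairCongruent P P') (h' : PairCongruent Q Q') :
    PairCongruent (fromBlocks P.1 0 0 Q.1, fromBlocks P.2 0 0 Q.2)
      (fromBlocks P'.1 0 0 Q'.1, fromBlocks P'.2 0 0 Q'.2) := by
  obtain ⟨S, T, hST, hTS, h₁, h₂⟩ := h
  obtain ⟨S', T', hST', hTS', h₁', h₂'⟩ := h'
  refine ⟨Matrix.fromBlocks S 0 0 S', Matrix.fromBlocks T 0 0 T', ?_, ?_, ?_, ?_⟩ <;>
    simp [fromBlocks_multiply, fromBlocks_transpose, *]

theorem mem_closure_setOf [TopologicalSpace R] [IsTopologicalRing R]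
    {P : Matrix ρ ρ R × Matrix ρ ρ R} {Q : Matrix ι ι R × Matrix ι ι R}
    {Q' : Matrix κ κ R × Matrix κ κ R} (hQ : Q ∈ closure {X | PairCongruent P X})
    (h : PairCongruent Q Q') : Q' ∈ closure {X | PairCongruent P X} := by
  obtain ⟨S, T, hST, hTS, h₁, h₂⟩ := h
  let act (X : Matrix ι ι R × Matrix ι ι R) := (Sᵀ * X.1 * S, Sᵀ * X.2 * S)
  have act_cont : Continuous act := by fun_prop
  have act_congr (X) (hX : PairCongruent P X) : PairCongruent P (act X) :=
    hX.trans ⟨S, T, hST, hTS, rfl, rfl⟩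
  have hQ' : act Q = Q' := Prod.ext h₁ h₂
  exact hQ' ▸ map_mem_closure act_cont hQ act_congr

end PairCongruent

theorem Pencil.congruent_iff_pairCongruent {n : ℕ} {P Q : Pencil n n} :
    P.Congruent Q ↔ PairCongruent P Q := by
  constructor
  · rintro ⟨S, ⟨⟨S, T, hST, hTS⟩, rfl⟩, h⟩
    exact ⟨S, T, hST, hTS, h⟩
  · rintro ⟨S, T, hST, hTS, h⟩
    exact ⟨S, ⟨⟨S, T, hST, hTS⟩, rfl⟩, h⟩

theorem Pencil.orbC_eq_setOf_pairCongruent {n : ℕ} (P : Pencil n n) :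
    P.orbC = {Q | PairCongruent P Q} :=
  Set.ext fun _ => congruent_iff_pairCongruent

end PairCongruent

section SkewBlock

variable {ι κ ν ρ R : Type*} [CommRing R]

/-- The skew-symmetric matrix `[[0, X], [-Xᵀ, 0]]` indexed by a sum type; `skewPair` is the same
matrix indexed by `Fin (p + q)`. -/
def skewBlock (X : Matrix ι κ R) : Matrix (ι ⊕ κ) (ι ⊕ κ) R :=
  fromBlocks 0 X (-Xᵀ) 0

theorem reindex_skewBlock (e : ι ≃ ν) (f : κ ≃ ρ) (X : Matrix ι κ R) :
    reindex (e.sumCongr f) (e.sumCongr f) (skewBlock X) = skewBlock (reindex e f X) := by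
  ext (i | i) (j | j) <;> simp [skewBlock]

theorem reindex_sumComm_skewBlock (X : Matrix ι κ R) :
    reindex (Equiv.sumComm ι κ) (Equiv.sumComm ι κ) (skewBlock X) = skewBlock (-Xᵀ) := by
  ext (i | i) (j | j) <;> simp [skewBlock]

theorem reindex_sumSumSumComm_fromBlocks_skewBlock (X : Matrix ι κ R) (Y : Matrix ν ρ R) :
    reindex (Equiv.sumSumSumComm ι κ ν ρ) (Equiv.sumSumSumComm ι κ ν ρ)
      (fromBlocks (skewBlock X) 0 0 (skewBlock Y)) = skewBlock (fromBlocks X 0 0 Y) := by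
  ext ((i | i) | (i | i)) ((j | j) | (j | j)) <;> simp [skewBlock]

variable [Fintype ι] [Fintype κ] [Fintype ν] [Fintype ρ]
  [DecidableEq ι] [DecidableEq κ] [DecidableEq ν] [DecidableEq ρ]

theorem pairCongruent_skewBlock_mul (X Y : Matrix ι κ R) {P : Matrix ν ι R} {P' : Matrix ι ν R}
    {Q : Matrix κ ρ R} {Q' : Matrix ρ κ R} (hP : P * P' = 1) (hP' : P' * P = 1)
    (hQ : Q * Q' = 1) (hQ' : Q' * Q = 1) :
    PairCongruent (skewBlock X, skewBlock Y)
      (skewBlock (P * X * Q), skewBlock (P * Y * Q)) := by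
  have hPt : P'ᵀ * Pᵀ = 1 := by rw [← transpose_mul, hP, transpose_one]
  have hPt' : Pᵀ * P'ᵀ = 1 := by rw [← transpose_mul, hP', transpose_one]
  refine ⟨fromBlocks Pᵀ 0 0 Q, fromBlocks P'ᵀ 0 0 Q', ?_, ?_, ?_, ?_⟩ <;>
    simp [skewBlock, fromBlocks_multiply, fromBlocks_transpose, Matrix.mul_assoc, *]

theorem pairCongruent_skewBlock_toMatrix {V W : Type*} [AddCommGroup V] [Module R V]
    [AddCommGroup W] [Module R W] (a : Basis κ R V) (a' : Basis ρ R V) (b : Basis ι R W)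
    (b' : Basis ν R W) (f g : V →ₗ[R] W) :
    PairCongruent (skewBlock (toMatrix a b f), skewBlock (toMatrix a b g))
      (skewBlock (toMatrix a' b' f), skewBlock (toMatrix a' b' g)) := by
  simpa only [basis_toMatrix_mul_linearMap_toMatrix_mul_basis_toMatrix] using
    pairCongruent_skewBlock_mul (toMatrix a b f) (toMatrix a b g)
      (b'.toMatrix_mul_toMatrix_flip b) (b.toMatrix_mul_toMatrix_flip b')
      (a.toMatrix_mul_toMatrix_flip a') (a'.toMatrix_mul_toMatrix_flip a)

theorem fromBlocks_one_smul_one_mul_inv (u : Rˣ) :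
    (fromBlocks 1 0 0 ((u : R) • 1) * fromBlocks 1 0 0 ((↑u⁻¹ : R) • 1) :
      Matrix (ι ⊕ ν) (ι ⊕ ν) R) = 1 := by
  simp [fromBlocks_multiply, smul_smul]

theorem fromBlocks_one_smul_one_inv_mul (u : Rˣ) :
    (fromBlocks 1 0 0 ((↑u⁻¹ : R) • 1) * fromBlocks 1 0 0 ((u : R) • 1) :
      Matrix (ι ⊕ ν) (ι ⊕ ν) R) = 1 := by
  simpa using fromBlocks_one_smul_one_mul_inv (ι := ι) (ν := ν) u⁻¹

theorem pairCongruent_skewBlock_fromBlocks_smul {A A' : Matrix ι κ R} {C C' : Matrix ν ρ R}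
    (Y Y' : Matrix ν κ R) (u : Rˣ) :
    PairCongruent (skewBlock (fromBlocks A 0 Y C), skewBlock (fromBlocks A' 0 Y' C'))
      (skewBlock (fromBlocks A 0 ((u : R) • Y) C),
        skewBlock (fromBlocks A' 0 ((u : R) • Y') C')) := by
  have h := pairCongruent_skewBlock_mul (fromBlocks A 0 Y C) (fromBlocks A' 0 Y' C')
    (fromBlocks_one_smul_one_mul_inv (ι := ι) (ν := ν) u)
    (fromBlocks_one_smul_one_inv_mul u)
    (fromBlocks_one_smul_one_inv_mul (ι := κ) (ν := ρ) u)
    (fromBlocks_one_smul_one_mul_inv u)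
  simpa [fromBlocks_multiply, smul_smul] using h

theorem skewBlock_fromBlocks_mem_closure {K : Type*} [Field K] [TopologicalSpace K]
    [IsTopologicalRing K] [(𝓝[≠] (0 : K)).NeBot] (A A' : Matrix ι κ K) (Y Y' : Matrix ν κ K)
    (C C' : Matrix ν ρ K) :
    (skewBlock (fromBlocks A 0 0 C), skewBlock (fromBlocks A' 0 0 C')) ∈
      closure {X | PairCongruent
        (skewBlock (fromBlocks A 0 Y C), skewBlock (fromBlocks A' 0 Y' C')) X} := by
  let D (ε : K) := (skewBlock (fromBlocks A 0 (ε • Y) C), skewBlock (fromBlocks A' 0 (ε • Y') C'))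
  have D_cont : Continuous D := by
    unfold D skewBlock
    fun_prop
  have D_zero : D 0 = (skewBlock (fromBlocks A 0 0 C), skewBlock (fromBlocks A' 0 0 C')) := by
    simp only [D, zero_smul]
  rw [← D_zero]
  refine mem_closure_of_tendsto (D_cont.continuousWithinAt (s := {0}ᶜ)) ?_
  filter_upwards [self_mem_nhdsWithin] with ε hε
  exact pairCongruent_skewBlock_fromBlocks_smul Y Y' (Units.mk0 ε hε)

end SkewBlock

theorem pairCongruent_skewPair {p q : ℕ} (X Y : Matrix (Fin p) (Fin q) ℂ) :
    PairCongruent (skewPair X, skewPair Y) (skewBlock X, skewBlock Y) :=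
  (PairCongruent.reindex (skewBlock X) (skewBlock Y) finSumFinEquiv).symm

theorem pairCongruent_dsum_skewBlock {ι κ ν ρ : Type*} [Fintype ι] [Fintype κ] [Fintype ν]
    [Fintype ρ] [DecidableEq ι] [DecidableEq κ] [DecidableEq ν] [DecidableEq ρ] {m n : ℕ}
    {P : Pencil m m} {Q : Pencil n n} {X X' : Matrix ι κ ℂ} {Y Y' : Matrix ν ρ ℂ}
    (hP : PairCongruent P (skewBlock X, skewBlock X'))
    (hQ : PairCongruent Q (skewBlock Y, skewBlock Y')) :
    PairCongruent (P.dsum Q)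
      (skewBlock (fromBlocks X 0 0 Y), skewBlock (fromBlocks X' 0 0 Y')) := by
  have dsum_blocks : PairCongruent (P.dsum Q) (fromBlocks P.1 0 0 Q.1, fromBlocks P.2 0 0 Q.2) :=
    (PairCongruent.reindex _ _ finSumFinEquiv).symm
  have regroup := PairCongruent.reindex (fromBlocks (skewBlock X) 0 0 (skewBlock Y))
    (fromBlocks (skewBlock X') 0 0 (skewBlock Y')) (Equiv.sumSumSumComm ι κ ν ρ)
  simp only [reindex_sumSumSumComm_fromBlocks_skewBlock] at regroup
  exact (dsum_blocks.trans (hP.fromBlocks hQ)).trans regroup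

section CyclicVector

/-- `v` is a cyclic vector of the endomorphism `f`: every vector is `g(f) v` for a
polynomial `g`. -/
def IsCyclicVector {R M : Type*} [CommSemiring R] [AddCommMonoid M] [Module R M] (f : End R M)
    (v : M) : Prop :=
  ∀ w, ∃ g : R[X], aeval f g v = w

theorem IsCyclicVector.of_basis {ι R M : Type*} [Finite ι] [CommSemiring R]
    [AddCommMonoid M] [Module R M] {f : End R M} {v : M} (b : Basis ι R M)
    (h : ∀ i, ∃ g : R[X], aeval f g v = b i) : IsCyclicVector f v := by
  have := Fintype.ofFinite ι
  intro w
  choose g hg using h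
  refine ⟨∑ i, b.repr w i • g i, ?_⟩
  simp only [map_sum, map_smul, LinearMap.sum_apply, LinearMap.smul_apply, hg, b.sum_repr]

section Matrix

variable {ι κ R : Type*} [Fintype ι] [Fintype κ] [DecidableEq ι] [DecidableEq κ] [CommRing R]

theorem aeval_toLin' (A : Matrix ι ι R) (g : R[X]) : aeval (toLin' A) g = toLin' (aeval A g) :=
  aeval_algHom_apply (toLinAlgEquiv' : Matrix ι ι R ≃ₐ[R] _) A g

theorem isCyclicVector_toLin' {A : Matrix ι ι R} {v : ι → R} :
    IsCyclicVector (toLin' A) v ↔ ∀ w, ∃ g : R[X], aeval A g *ᵥ v = w := by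
  simp only [IsCyclicVector, aeval_toLin', toLin'_apply]

theorem aeval_fromBlocks_zero (A : Matrix ι ι R) (B : Matrix κ κ R) (g : R[X]) :
    aeval (fromBlocks A 0 0 B) g = fromBlocks (aeval A g) 0 0 (aeval B g) := by
  induction g using Polynomial.induction_on' with
  | add g h hg hh => simp [hg, hh, fromBlocks_add]
  | monomial n c =>
    simp [aeval_monomial, fromBlocks_diagonal_pow, ← Algebra.smul_def, fromBlocks_smul]

theorem IsCyclicVector.reindex {A : Matrix ι ι R} {v : ι → R} (h : IsCyclicVector (toLin' A) v)
    (e : ι ≃ κ) : IsCyclicVector (toLin' (reindex e e A)) (v ∘ e.symm) := by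
  rw [isCyclicVector_toLin'] at h ⊢
  intro w
  obtain ⟨g, hg⟩ := h (w ∘ e)
  have hA : aeval (Matrix.reindex e e A) g = Matrix.reindex e e (aeval A g) :=
    aeval_algHom_apply (reindexAlgEquiv R R e) A g
  refine ⟨g, ?_⟩
  rw [hA, reindex_apply, submatrix_mulVec_equiv]
  simp [Function.comp_assoc, hg]

/- A Bézout identity for the characteristic polynomials yields polynomials acting as `1` on one
block and as `0` on the other, so the two coordinates can be hit independently. -/
theorem IsCyclicVector.fromBlocks_of_isCoprime {A : Matrix ι ι R} {B : Matrix κ κ R}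
    {v : ι → R} {w : κ → R} (hv : IsCyclicVector (toLin' A) v) (hw : IsCyclicVector (toLin' B) w)
    (hcop : IsCoprime A.charpoly B.charpoly) :
    IsCyclicVector (toLin' (fromBlocks A 0 0 B)) (Sum.elim v w) := by
  rw [isCyclicVector_toLin'] at hv hw ⊢
  intro x
  obtain ⟨r, s, hrs⟩ := hcop
  obtain ⟨g, hg⟩ := hv (x ∘ Sum.inl)
  obtain ⟨h, hh⟩ := hw (x ∘ Sum.inr)
  have hA : aeval A (s * B.charpoly) = 1 := by
    simpa [aeval_self_charpoly] using congrArg (aeval A) hrs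
  have hB : aeval B (r * A.charpoly) = 1 := by
    simpa [aeval_self_charpoly] using congrArg (aeval B) hrs
  have hgA : aeval A (g * (s * B.charpoly) + h * (r * A.charpoly)) = aeval A g := by
    rw [map_add, map_mul, hA]
    simp [aeval_self_charpoly]
  have hhB : aeval B (g * (s * B.charpoly) + h * (r * A.charpoly)) = aeval B h := by
    rw [map_add, map_mul _ h, hB]
    simp [aeval_self_charpoly]
  refine ⟨g * (s * B.charpoly) + h * (r * A.charpoly), ?_⟩
  rw [aeval_fromBlocks_zero, hgA, hhB, fromBlocks_mulVec]
  simp [hg, hh]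

end Matrix

section Field

variable {K V : Type*} [Field K] [AddCommGroup V] [Module K V] [FiniteDimensional K V]
  {f : End K V} {v : V}

theorem IsCyclicVector.linearIndependent_pow (hv : IsCyclicVector f v) {n : ℕ}
    (hn : finrank K V = n) : LinearIndependent K fun i : Fin n => (f ^ (i : ℕ)) v := by
  refine linearIndependent_of_top_le_span_of_card_eq_finrank (fun w _ => ?_) (by simp [hn])
  obtain ⟨g, rfl⟩ := hv w
  have hdeg : (g %ₘ f.charpoly).degree < n := by
    rw [← hn, ← f.charpoly_natDegree, ← degree_eq_natDegree f.charpoly_monic.ne_zero]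
    exact degree_modByMonic_lt g f.charpoly_monic
  rw [← aeval_modByMonic_eq_self_of_root f.aeval_self_charpoly, aeval_def, eval₂_eq_sum,
    ← sum_fin _ (by simp) hdeg, LinearMap.sum_apply]
  refine Submodule.sum_mem _ fun i _ => ?_
  rw [← Algebra.smul_def, LinearMap.smul_apply]
  exact Submodule.smul_mem _ _ (Submodule.subset_span ⟨i, rfl⟩)

theorem IsCyclicVector.exists_dual_pow_eq (hv : IsCyclicVector f v) {n : ℕ}
    (hn : finrank K V = n + 1) :
    ∃ φ : Dual K V, φ ((f ^ n) v) = 1 ∧ ∀ i < n, φ ((f ^ i) v) = 0 := by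
  let b := basisOfLinearIndependentOfCardEqFinrank (hv.linearIndependent_pow hn) (by simp [hn])
  have hb (i : Fin (n + 1)) : b i = (f ^ (i : ℕ)) v := by
    simp only [b, coe_basisOfLinearIndependentOfCardEqFinrank]
  have coord_pow (i : Fin (n + 1)) :
      b.coord (Fin.last n) ((f ^ (i : ℕ)) v) = if i = Fin.last n then 1 else 0 := by
    rw [← hb, Basis.coord_apply, b.repr_self, Finsupp.single_apply]
  refine ⟨b.coord (Fin.last n), by simpa using coord_pow (Fin.last n), fun i hi => ?_⟩
  simpa [Fin.ext_iff, hi.ne] using coord_pow ⟨i, by omega⟩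

end Field

end CyclicVector

section AdaptedBasis

variable {K V : Type*} [Field K] [AddCommGroup V] [Module K V]

theorem surjective_pi_of_linearIndependent {ι : Type*} [Finite ι] {φ : ι → Dual K V}
    (hφ : LinearIndependent K φ) : Function.Surjective (LinearMap.pi φ) := by
  classical
  have := Fintype.ofFinite ι
  rw [← LinearMap.dualMap_injective_iff, injective_iff_map_eq_zero]
  intro c hc
  have hsum : ∑ i, c (Pi.single i 1) • φ i = 0 := by
    ext w
    have hcw : c (LinearMap.pi φ w) = 0 := LinearMap.congr_fun hc w
    rw [LinearMap.pi_apply_eq_sum_univ] at hcw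
    simpa [← Pi.single_apply, Pi.single_comm, mul_comm] using hcw
  exact LinearMap.pi_ext' fun i => LinearMap.ext_ring (Fintype.linearIndependent_iff.1 hφ _ hsum i)

theorem exists_basis_sum_of_dual {ι κ : Type*} [Fintype ι] [Fintype κ] [FiniteDimensional K V]
    {φ : ι → Dual K V} {w : κ → V} (hφ : LinearIndependent K φ) (hw : LinearIndependent K w)
    (hφw : ∀ i k, φ i (w k) = 0) (hcard : Fintype.card ι + Fintype.card κ = finrank K V) :
    ∃ b : Basis (ι ⊕ κ) K V, (∀ i, b.coord (Sum.inl i) = φ i) ∧ ∀ k, b (Sum.inr k) = w k := by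
  classical
  choose x hx using fun j => surjective_pi_of_linearIndependent hφ (Pi.single j (1 : K))
  have hφx (i j) : φ i (x j) = (Pi.single j 1 : ι → K) i := congrFun (hx j) i
  have hli : LinearIndependent K (Sum.elim x w) := by
    rw [Fintype.linearIndependent_iff]
    intro c hc
    simp only [Fintype.sum_sum_type, Sum.elim_inl, Sum.elim_inr] at hc
    have hinl (i) : c (Sum.inl i) = 0 := by
      simpa [hφx, hφw, Pi.single_apply] using congrArg (φ i) hc
    have hinr : ∑ k, c (Sum.inr k) • w k = 0 := by simpa [hinl] using hc
    rintro (i | k)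
    · exact hinl i
    · exact Fintype.linearIndependent_iff.1 hw _ hinr k
  let b := basisOfLinearIndependentOfCardEqFinrank' _ hli (by simpa using hcard)
  have hb : ⇑b = Sum.elim x w := coe_basisOfLinearIndependentOfCardEqFinrank' ..
  refine ⟨b, fun i => b.ext ?_, fun k => by rw [hb, Sum.elim_inr]⟩
  rintro (j | k) <;> rw [Basis.coord_apply, b.repr_self, hb]
  · simp [hφx, Finsupp.single_apply, Pi.single_apply, eq_comm]
  · simp [hφw]

/-- The `k × (k + 1)` matrix with ones on the `s`-th superdiagonal: `F_k` for `s = 1`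
and `G_k` for `s = 0`. -/
def shiftMatrix (K : Type*) [Zero K] [One K] (s k : ℕ) : Matrix (Fin k) (Fin (k + 1)) K :=
  of fun i j => if (j : ℕ) = i + s then 1 else 0

variable {f : End K V} {v : V}

/- Evaluated at `v, f v, …, fⁿ v` in reverse order, these functionals form a unitriangular
matrix. -/
theorem linearIndependent_dual_comp_pow {φ : Dual K V} {n : ℕ} (hn : φ ((f ^ n) v) = 1)
    (hlt : ∀ i < n, φ ((f ^ i) v) = 0) :
    LinearIndependent K fun i : Fin (n + 1) => φ ∘ₗ f ^ (i : ℕ) := by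
  let ev : Dual K V →ₗ[K] Fin (n + 1) → K :=
    LinearMap.pi fun j => Dual.eval K V ((f ^ (n - j : ℕ)) v)
  let A : Matrix (Fin (n + 1)) (Fin (n + 1)) K := of fun i => ev (φ ∘ₗ f ^ (i : ℕ))
  have hA (i j) : A i j = φ ((f ^ (i + (n - j) : ℕ)) v) := by
    simp [A, ev, pow_add]
  have hA_tri : A.IsLowerTriangular := by
    intro i j (hij : i < j)
    rw [hA, hlt]
    omega
  have hA_det : A.det = 1 := by
    rw [det_of_isLowerTriangular _ hA_tri]
    refine Finset.prod_eq_one fun i _ => ?_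
    rw [hA, Nat.add_sub_cancel' (Fin.is_le i), hn]
  have hA_row : LinearIndependent K A.row :=
    linearIndependent_rows_iff_isUnit.2 (A.isUnit_iff_isUnit_det.2 (hA_det ▸ isUnit_one))
  exact LinearIndependent.of_comp ev hA_row

theorem exists_toMatrix_pow_eq_fromBlocks {φ : Dual K V} {p q s : ℕ} (hs : s ≤ 1)
    {a : Basis (Fin (p + 1) ⊕ Fin q) K V} {b : Basis (Fin p ⊕ Fin (q + 1)) K V}
    (ha : ∀ i, a.coord (Sum.inl i) = φ ∘ₗ f ^ (i : ℕ))
    (ha' : ∀ j, a (Sum.inr j) = -(f ^ (j : ℕ)) v)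
    (hb : ∀ i, b.coord (Sum.inl i) = φ ∘ₗ f ^ (i : ℕ))
    (hb' : ∀ j, b (Sum.inr j) = (f ^ (j : ℕ)) v) :
    ∃ Y, toMatrix a b (f ^ s) =
      fromBlocks (shiftMatrix K s p) 0 Y (-(shiftMatrix K s q)ᵀ) := by
  have coord_shift (i : Fin p) (w) :
      b.coord (Sum.inl i) ((f ^ s) w) = a.coord (Sum.inl ⟨i + s, by omega⟩) w := by
    rw [hb, ha]
    simp [pow_add]
  have shift_inr (j : Fin q) : (f ^ s) (a (Sum.inr j)) = -b (Sum.inr ⟨j + s, by omega⟩) := by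
    rw [ha', hb', map_neg, ← Module.End.mul_apply, ← pow_add, add_comm]
  refine ⟨(toMatrix a b (f ^ s)).toBlocks₂₁, ?_⟩
  ext (i | i) (j | j) <;> rw [LinearMap.toMatrix_apply]
  · rw [← b.coord_apply, coord_shift]
    simp [shiftMatrix, Finsupp.single_apply, Fin.ext_iff]
  · simp [shift_inr]
  · simp [toBlocks₂₁, LinearMap.toMatrix_apply]
  · simp [shift_inr, shiftMatrix, Finsupp.single_apply, Fin.ext_iff, eq_comm]

theorem IsCyclicVector.exists_toMatrix_eq_fromBlocks [FiniteDimensional K V]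
    (hv : IsCyclicVector f v) {p q : ℕ} (hpq : p + q + 1 = finrank K V) :
    ∃ (a : Basis (Fin (p + 1) ⊕ Fin q) K V) (b : Basis (Fin p ⊕ Fin (q + 1)) K V)
      (Y Z : Matrix (Fin (q + 1)) (Fin (p + 1)) K),
      toMatrix a b f = fromBlocks (shiftMatrix K 1 p) 0 Y (-(shiftMatrix K 1 q)ᵀ) ∧
      toMatrix a b LinearMap.id =
        fromBlocks (shiftMatrix K 0 p) 0 Z (-(shiftMatrix K 0 q)ᵀ) := by
  obtain ⟨φ, hφ, hφ_lt⟩ := hv.exists_dual_pow_eq hpq.symm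
  have φ_li {m : ℕ} (hm : m ≤ p + q + 1) : LinearIndependent K fun i : Fin m => φ ∘ₗ f ^ (i : ℕ) :=
    (linearIndependent_dual_comp_pow hφ hφ_lt).comp (Fin.castLE hm) (Fin.castLE_injective hm)
  have pow_li {m : ℕ} (hm : m ≤ p + q + 1) : LinearIndependent K fun j : Fin m => (f ^ (j : ℕ)) v :=
    (hv.linearIndependent_pow hpq.symm).comp (Fin.castLE hm) (Fin.castLE_injective hm)
  have φ_pow {i j : ℕ} (hij : i + j < p + q) : (φ ∘ₗ f ^ i) ((f ^ j) v) = 0 := by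
    rw [LinearMap.comp_apply, ← Module.End.mul_apply, ← pow_add, hφ_lt _ hij]
  obtain ⟨a, ha, ha'⟩ := exists_basis_sum_of_dual (ι := Fin (p + 1)) (κ := Fin q)
    (φ_li (by omega)) (pow_li (by omega)).neg
    (fun i j => by simpa using φ_pow (i := i) (j := j) (by omega)) (by simp; omega)
  obtain ⟨b, hb, hb'⟩ := exists_basis_sum_of_dual (ι := Fin p) (κ := Fin (q + 1))
    (φ_li (by omega)) (pow_li (by omega)) (fun i j => φ_pow (by omega)) (by simp; omega)
  obtain ⟨Y, hY⟩ := exists_toMatrix_pow_eq_fromBlocks le_rfl ha ha' hb hb'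
  obtain ⟨Z, hZ⟩ := exists_toMatrix_pow_eq_fromBlocks zero_le_one ha ha' hb hb'
  rw [pow_one] at hY
  rw [pow_zero, Module.End.one_eq_id] at hZ
  exact ⟨a, b, Y, Z, hY, hZ⟩

end AdaptedBasis

section JordanSum

theorem isUpperTriangular_Jmat (k : ℕ) (μ : ℂ) : (Jmat k μ).IsUpperTriangular := by
  intro i j (hij : j < i)
  have : (j : ℕ) < i := hij
  simp [Jmat, this.ne, show (j : ℕ) ≠ i + 1 by omega]

theorem charpoly_Jmat (k : ℕ) (μ : ℂ) : (Jmat k μ).charpoly = (X - C μ) ^ k := by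
  rw [charpoly_of_isUpperTriangular _ (isUpperTriangular_Jmat k μ)]
  simp [Jmat]

theorem col_succ_Jmat {k : ℕ} (μ : ℂ) (j : Fin k) :
    (Jmat (k + 1) μ).col j.succ = μ • Pi.single j.succ 1 + Pi.single j.castSucc 1 := by
  ext i
  by_cases h : (i : ℕ) = j + 1
  · simp [Jmat, Pi.single_apply, Fin.ext_iff, h]
  · simp [Jmat, Pi.single_apply, Fin.ext_iff, h, eq_comm]

theorem isCyclicVector_Jmat (k : ℕ) (μ : ℂ) :
    IsCyclicVector (toLin' (Jmat (k + 1) μ)) (Pi.single (Fin.last k) 1) := by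
  refine .of_basis (Pi.basisFun ℂ _) fun j => ?_
  induction j using Fin.reverseInduction with
  | last => exact ⟨1, by simp⟩
  | cast j ih =>
    obtain ⟨g, hg⟩ := ih
    refine ⟨(X - C μ) * g, ?_⟩
    simp only [map_mul, map_sub, aeval_X, aeval_C, Module.End.mul_apply, hg]
    simp [col_succ_Jmat]

theorem exists_isCyclicVector_Jmat (k : ℕ) (μ : ℂ) : ∃ v, IsCyclicVector (toLin' (Jmat k μ)) v := by
  cases k with
  | zero => exact ⟨0, fun w => ⟨0, Subsingleton.elim _ _⟩⟩
  | succ k => exact ⟨_, isCyclicVector_Jmat k μ⟩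

/-- The block-diagonal Jordan matrix `J_{k₁}(μ₁) ⊕ ⋯ ⊕ J_{k_t}(μ_t)`. -/
def jordanSum : (l : List (ℂ × ℕ)) →
    Matrix (Fin (l.map Prod.snd).sum) (Fin (l.map Prod.snd).sum) ℂ
  | [] => 0
  | x :: t => reindex finSumFinEquiv finSumFinEquiv (fromBlocks (Jmat x.2 x.1) 0 0 (jordanSum t))

theorem charpoly_jordanSum (l : List (ℂ × ℕ)) :
    (jordanSum l).charpoly = (l.map fun x => (X - C x.1) ^ x.2).prod := by
  induction l with
  | nil => exact det_isEmpty (n := Fin 0)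
  | cons x t ih =>
    calc (jordanSum (x :: t)).charpoly
        = (fromBlocks (Jmat x.2 x.1) 0 0 (jordanSum t)).charpoly := charpoly_reindex _ _
      _ = _ := by
        rw [charpoly_fromBlocks_zero₁₂, charpoly_Jmat, ih, List.map_cons, List.prod_cons]

theorem isCoprime_charpoly_jordanSum {μ : ℂ} (k : ℕ) {l : List (ℂ × ℕ)} (hμ : μ ∉ l.map Prod.fst) :
    IsCoprime (Jmat k μ).charpoly (jordanSum l).charpoly := by
  rw [charpoly_Jmat, charpoly_jordanSum]
  refine List.prod_induction _ (fun _ _ => IsCoprime.mul_right) isCoprime_one_right ?_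
  simp only [List.forall_mem_map]
  intro x hx
  have hne : μ - x.1 ≠ 0 := sub_ne_zero.2 fun h => hμ (h ▸ List.mem_map_of_mem hx)
  exact (isCoprime_X_sub_C_of_isUnit_sub hne.isUnit).pow

theorem exists_isCyclicVector_jordanSum {l : List (ℂ × ℕ)} (hl : (l.map Prod.fst).Nodup) :
    ∃ v, IsCyclicVector (toLin' (jordanSum l)) v := by
  induction l with
  | nil => exact ⟨0, fun w => ⟨0, Subsingleton.elim (α := Fin 0 → ℂ) _ _⟩⟩
  | cons x t ih =>
    obtain ⟨hx, ht⟩ := List.nodup_cons.1 hl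
    obtain ⟨v, hv⟩ := exists_isCyclicVector_Jmat x.2 x.1
    obtain ⟨w, hw⟩ := ih ht
    have hvw := hv.fromBlocks_of_isCoprime hw (isCoprime_charpoly_jordanSum x.2 hx)
    exact ⟨_, hvw.reindex finSumFinEquiv⟩

theorem pairCongruent_hSum (l : List (ℂ × ℕ)) :
    PairCongruent (hSum l) (skewBlock (jordanSum l), skewBlock 1) := by
  induction l with
  | nil =>
    have : IsEmpty (Fin (hSize [])) := Fin.isEmpty
    have : IsEmpty (Fin (([] : List (ℂ × ℕ)).map Prod.snd).sum) := Fin.isEmpty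
    exact .of_isEmpty
  | cons x t ih =>
    have h := (pairCongruent_dsum_skewBlock (pairCongruent_skewPair (Jmat x.2 x.1) 1) ih).trans
      (.reindex _ _ (finSumFinEquiv.sumCongr finSumFinEquiv))
    simp only [reindex_skewBlock, fromBlocks_one] at h
    rw [reindex_apply _ _ (1 : Matrix _ _ ℂ), submatrix_one_equiv] at h
    exact h

end JordanSum

theorem pairCongruent_dsum_Mblk (p q : ℕ) :
    PairCongruent ((Mblk p).dsum (Mblk q))
      (skewBlock (fromBlocks (Fmat p) 0 0 (-(Fmat q)ᵀ)),
        skewBlock (fromBlocks (Gmat p) 0 0 (-(Gmat q)ᵀ))) := by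
  refine pairCongruent_dsum_skewBlock (pairCongruent_skewPair _ _)
    ((pairCongruent_skewPair _ _).trans ?_)
  simpa only [reindex_sumComm_skewBlock] using
    PairCongruent.reindex (skewBlock (Fmat q)) (skewBlock (Gmat q)) (Equiv.sumComm _ _)

theorem pairCongruent_cast {m n : ℕ} (h : m = n) (P : Pencil m m) :
    PairCongruent P (P.cast h h) :=
  PairCongruent.reindex P.1 P.2 (finCongr h)

/-- **Rule 4 transition as an orbit closure inclusion**: for pairwise distinct
`μ₁, …, μ_t ∈ ℂ`, positive `k₁, …, k_t` and `p + q + 1 = k₁ + ⋯ + k_t`,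
`orbᶜ (M_p ⊕ M_q) ⊆ closure (orbᶜ (H_{k₁}(μ₁) ⊕ ⋯ ⊕ H_{k_t}(μ_t)))`. -/
theorem orbC_M_pair_subset_closure_H_sum (l : List (ℂ × ℕ))
    (hdist : (l.map Prod.fst).Nodup) (hpos : ∀ x ∈ l, 1 ≤ x.2) (p q : ℕ)
    (hpq : p + q + 1 = (l.map Prod.snd).sum)
    (hcast : p + (p + 1) + (q + (q + 1)) = hSize l) :
    Pencil.orbC (Pencil.cast hcast hcast (Pencil.dsum (Mblk p) (Mblk q))) ⊆
      closure (Pencil.orbC (hSum l)) := by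
  obtain ⟨v, hv⟩ := exists_isCyclicVector_jordanSum hdist
  obtain ⟨a, b, Y, Z, hY, hZ⟩ :=
    hv.exists_toMatrix_eq_fromBlocks (p := p) (q := q) (by simpa using hpq)
  let e := Pi.basisFun ℂ (Fin (l.map Prod.snd).sum)
  have hH : PairCongruent (hSum l)
      (skewBlock (fromBlocks (Fmat p) 0 Y (-(Fmat q)ᵀ)),
        skewBlock (fromBlocks (Gmat p) 0 Z (-(Gmat q)ᵀ))) := by
    have h := pairCongruent_skewBlock_toMatrix e a e b (toLin' (jordanSum l)) LinearMap.id
    rw [hY, hZ, LinearMap.toMatrix_id, LinearMap.toMatrix_eq_toMatrix',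
      LinearMap.toMatrix'_toLin'] at h
    exact (pairCongruent_hSum l).trans h
  have hM := (pairCongruent_dsum_Mblk p q).symm.trans (pairCongruent_cast hcast _)
  simp only [Pencil.orbC_eq_setOf_pairCongruent]
  intro R hR
  have hlim := skewBlock_fromBlocks_mem_closure (Fmat p) (Gmat p) Y Z (-(Fmat q)ᵀ) (-(Gmat q)ᵀ)
  exact PairCongruent.mem_closure_setOf (closure_mono (fun _ => hH.trans) hlim) (hM.trans hR)
end
end
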